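/- For all real numbers c, δ with 0 < c < δ < 1, there exists a finite Stackelberg game (u_l, u_f) with m = 3 leader actions, n = 2 follower actions, utilities in [0,1], and inducibility gap Δ satisfying δ < Δ, such that every δ-RSE leader strategy x* (i.e., every x* ∈ Δ^m attaining u_RSE(δ)) satisfies max_{j ∈ BR_δ(x*)} u_l(x*, j) − min_{j ∈ BR_δ(x*)} u_l(x*, j) ≥ c. In particular, the follower's tie-breaking rule over the δ-optimal response set changes the leader's payoff by at least c at every δ-RSE. -/

import Mathlib

open Finset Set

noncomputable section

/-- The simplex of mixed strategies over `m` actions. -/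
def simplex (m : ℕ) : Set (Fin m → ℝ) := stdSimplex ℝ (Fin m)

/-- Mixed-strategy extension of a utility matrix: `u(x, j) = ∑ i, x i * u i j`. -/
def mixU {m n : ℕ} (u : Fin m → Fin n → ℝ) (x : Fin m → ℝ) (j : Fin n) : ℝ :=
  ∑ i, x i * u i j

/-- The follower's δ-optimal response set (strict inequality):
`BR_δ(x) = {j : u_f(x,j) > max_{j'} u_f(x,j') - δ}`. -/
def BRd {m n : ℕ} (uf : Fin m → Fin n → ℝ) (δ : ℝ) (x : Fin m → ℝ) : Set (Fin n) :=
  {j | mixU uf x j > (⨆ j', mixU uf x j') - δ}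

/-- The follower's exact best-response set. -/
def BR0 {m n : ℕ} (uf : Fin m → Fin n → ℝ) (x : Fin m → ℝ) : Set (Fin n) :=
  {j | mixU uf x j = ⨆ j', mixU uf x j'}

/-- Worst-case leader utility over the follower's δ-optimal response set:
`min_{j ∈ BR_δ(x)} u_l(x, j)`. -/
def valBR {m n : ℕ} (ul uf : Fin m → Fin n → ℝ) (δ : ℝ) (x : Fin m → ℝ) : ℝ :=
  sInf (mixU ul x '' BRd uf δ x)

/-- The δ-RSE leader utility `u_RSE(δ) = sup_{x ∈ Δ^m} min_{j ∈ BR_δ(x)} u_l(x, j)`. -/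
def uRSE {m n : ℕ} (ul uf : Fin m → Fin n → ℝ) (δ : ℝ) : ℝ :=
  sSup (valBR ul uf δ '' simplex m)

/-- The SSE leader utility `u_SSE = sup_{x ∈ Δ^m} max_{j ∈ BR_0(x)} u_l(x, j)`. -/
def uSSE {m n : ℕ} (ul uf : Fin m → Fin n → ℝ) : ℝ :=
  sSup ((fun x => sSup (mixU ul x '' BR0 uf x)) '' simplex m)

/-- The maximin leader utility `u_MM = sup_{x ∈ Δ^m} min_{j ∈ [n]} u_l(x, j)`. -/
def uMM {m n : ℕ} (ul : Fin m → Fin n → ℝ) : ℝ :=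
  sSup ((fun x => ⨅ j, mixU ul x j) '' simplex m)

/-- The inducibility gap
`Δ = min_{j} sup_{x ∈ Δ^m} min_{j' ≠ j} (u_f(x, j) - u_f(x, j'))`. -/
def indGap {m n : ℕ} (uf : Fin m → Fin n → ℝ) : ℝ :=
  ⨅ j, sSup ((fun x => ⨅ j' : {k : Fin n // k ≠ j}, (mixU uf x j - mixU uf x j'.1)) '' simplex m)

/-!
In the example game the leader's third action makes the follower indifferent between its two
actions and guarantees the leader `1 - c`, with exactly `c` more if the follower picks the first
one. Any other strategy wastes probability: if the second response remains `δ`-optimal, the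
leader gets at most `x 2 * (1 - c)`, and driving it out of the response set costs mass at least
`δ > c` on the first action, leaving at most `1 - δ < 1 - c`. So the third action is the unique
`δ`-RSE, and there both responses are `δ`-optimal.
-/

section Stackelberg

variable {m n : ℕ}

lemma eq_single_of_mem_simplex_of_one_le {x : Fin m → ℝ} (hx : x ∈ simplex m) {i : Fin m}
    (hi : 1 ≤ x i) : x = Pi.single i 1 := by
  have hsum : x i + ∑ k ∈ univ.erase i, x k = 1 :=
    (add_sum_erase univ x (mem_univ i)).trans hx.2
  have hrest_nonneg : ∀ k ∈ univ.erase i, 0 ≤ x k := fun k _ => hx.1 k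
  have hrest : ∑ k ∈ univ.erase i, x k = 0 :=
    le_antisymm (by linarith) (sum_nonneg hrest_nonneg)
  ext k
  obtain rfl | hk := eq_or_ne k i
  · rw [Pi.single_eq_same]
    linarith
  · rw [Pi.single_eq_of_ne hk]
    exact (sum_eq_zero_iff_of_nonneg hrest_nonneg).1 hrest k (mem_erase.2 ⟨hk, mem_univ k⟩)

@[simp]
lemma mixU_single (u : Fin m → Fin n → ℝ) (i : Fin m) (j : Fin n) :
    mixU u (Pi.single i 1) j = u i j := by
  simp [mixU, Pi.single_apply]

lemma continuous_mixU (u : Fin m → Fin n → ℝ) (j : Fin n) : Continuous fun x => mixU u x j := by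
  unfold mixU
  fun_prop

lemma mem_BRd_iff {uf : Fin m → Fin n → ℝ} {δ : ℝ} {x : Fin m → ℝ} {j : Fin n} :
    j ∈ BRd uf δ x ↔ ∀ k, mixU uf x k < mixU uf x j + δ := by
  have : Nonempty (Fin n) := ⟨j⟩
  obtain ⟨k₀, hk₀⟩ := exists_eq_ciSup_of_finite (f := mixU uf x)
  change (⨆ k, mixU uf x k) - δ < mixU uf x j ↔ _
  rw [sub_lt_iff_lt_add]
  exact ⟨fun h k => (le_ciSup (finite_range _).bddAbove k).trans_lt h, fun h => hk₀ ▸ h k₀⟩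

lemma BRd_nonempty [NeZero n] (uf : Fin m → Fin n → ℝ) {δ : ℝ} (hδ : 0 < δ) (x : Fin m → ℝ) :
    (BRd uf δ x).Nonempty := by
  obtain ⟨j, hj⟩ := Finite.exists_max (mixU uf x)
  exact ⟨j, mem_BRd_iff.2 fun k => (hj k).trans_lt (lt_add_of_pos_right _ hδ)⟩

lemma valBR_le_mixU (ul : Fin m → Fin n → ℝ) {uf : Fin m → Fin n → ℝ} {δ : ℝ} {x : Fin m → ℝ}
    {j : Fin n} (hj : j ∈ BRd uf δ x) : valBR ul uf δ x ≤ mixU ul x j :=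
  csInf_le (toFinite _).bddBelow (mem_image_of_mem _ hj)

lemma le_valBR [NeZero n] {ul uf : Fin m → Fin n → ℝ} {δ a : ℝ} (hδ : 0 < δ) {x : Fin m → ℝ}
    (h : ∀ j ∈ BRd uf δ x, a ≤ mixU ul x j) : a ≤ valBR ul uf δ x :=
  le_csInf ((BRd_nonempty uf hδ x).image _) (forall_mem_image.2 h)

lemma mixU_sub_mixU_le_sSup_sub_sInf (ul : Fin m → Fin n → ℝ) {uf : Fin m → Fin n → ℝ} {δ : ℝ}
    {x : Fin m → ℝ} {j k : Fin n} (hj : j ∈ BRd uf δ x) (hk : k ∈ BRd uf δ x) :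
    mixU ul x j - mixU ul x k ≤ sSup (mixU ul x '' BRd uf δ x) - sInf (mixU ul x '' BRd uf δ x) :=
  sub_le_sub (le_csSup (toFinite _).bddAbove (mem_image_of_mem _ hj)) (valBR_le_mixU ul hk)

lemma bddAbove_image_valBR [NeZero n] (ul uf : Fin m → Fin n → ℝ) {δ : ℝ} (hδ : 0 < δ) :
    BddAbove (valBR ul uf δ '' simplex m) := by
  have hbdd : BddAbove (⋃ j ∈ Set.univ, (fun x => mixU ul x j) '' simplex m) :=
    finite_univ.bddAbove_biUnion.2 fun j _ =>
      (isCompact_stdSimplex ℝ (Fin m)).bddAbove_image (continuous_mixU ul j).continuousOn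
  obtain ⟨B, hB⟩ := hbdd
  refine ⟨B, forall_mem_image.2 fun x hx => ?_⟩
  obtain ⟨j, hj⟩ := BRd_nonempty uf hδ x
  exact (valBR_le_mixU ul hj).trans (hB (mem_biUnion (Set.mem_univ j) (mem_image_of_mem _ hx)))

lemma valBR_le_uRSE [NeZero n] (ul uf : Fin m → Fin n → ℝ) {δ : ℝ} (hδ : 0 < δ) {x : Fin m → ℝ}
    (hx : x ∈ simplex m) : valBR ul uf δ x ≤ uRSE ul uf δ :=
  le_csSup (bddAbove_image_valBR ul uf hδ) (mem_image_of_mem _ hx)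

lemma le_indGap [Nontrivial (Fin n)] {uf : Fin m → Fin n → ℝ} {a : ℝ}
    (h : ∀ j, ∃ x ∈ simplex m, ∀ k ≠ j, mixU uf x k + a ≤ mixU uf x j) : a ≤ indGap uf := by
  refine le_ciInf fun j => ?_
  obtain ⟨k₀, hk₀⟩ := exists_ne j
  have : Nonempty {k // k ≠ j} := ⟨⟨k₀, hk₀⟩⟩
  obtain ⟨x, hx, hxj⟩ := h j
  have hbdd : BddAbove ((fun y => ⨅ k : {k // k ≠ j}, (mixU uf y j - mixU uf y k.1)) ''
      simplex m) := by
    obtain ⟨B, hB⟩ := (isCompact_stdSimplex ℝ (Fin m)).bddAbove_image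
      ((continuous_mixU uf j).sub (continuous_mixU uf k₀)).continuousOn
    exact ⟨B, forall_mem_image.2 fun y hy =>
      (ciInf_le (finite_range _).bddBelow ⟨k₀, hk₀⟩).trans (hB (mem_image_of_mem _ hy))⟩
  exact le_csSup_of_le hbdd (mem_image_of_mem _ hx)
    (le_ciInf fun k => le_sub_iff_add_le'.2 (hxj k.1 k.2))

end Stackelberg

section TieBreakingGame

variable {c δ : ℝ} {x : Fin 3 → ℝ}

/-- The leader's utility matrix in the example game: only the third action pays, and `c` is what
the leader loses on it when the follower answers with action `1` instead of action `0`. -/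
def tieLeaderU (c : ℝ) : Fin 3 → Fin 2 → ℝ := ![![0, 0], ![0, 0], ![1, 1 - c]]

/-- The follower's utility matrix in the example game: the first two leader actions induce the two
responses with gap `1`, and the third leaves the follower indifferent. -/
def tieFollowerU : Fin 3 → Fin 2 → ℝ := ![![1, 0], ![0, 1], ![0, 0]]

lemma tieLeaderU_mem_Icc (hc : c ∈ Set.Icc (0 : ℝ) 1) (i : Fin 3) (j : Fin 2) :
    tieLeaderU c i j ∈ Set.Icc (0 : ℝ) 1 := by
  fin_cases i <;> fin_cases j <;> simp [tieLeaderU, hc.1, hc.2]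

lemma tieFollowerU_mem_Icc (i : Fin 3) (j : Fin 2) : tieFollowerU i j ∈ Set.Icc (0 : ℝ) 1 := by
  fin_cases i <;> fin_cases j <;> simp [tieFollowerU]

lemma mixU_tieLeaderU_zero (c : ℝ) (x : Fin 3 → ℝ) : mixU (tieLeaderU c) x 0 = x 2 := by
  simp [mixU, tieLeaderU, Fin.sum_univ_three]

lemma mixU_tieLeaderU_one (c : ℝ) (x : Fin 3 → ℝ) :
    mixU (tieLeaderU c) x 1 = x 2 * (1 - c) := by
  simp [mixU, tieLeaderU, Fin.sum_univ_three]

lemma mixU_tieFollowerU_zero (x : Fin 3 → ℝ) : mixU tieFollowerU x 0 = x 0 := by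
  simp [mixU, tieFollowerU, Fin.sum_univ_three]

lemma mixU_tieFollowerU_one (x : Fin 3 → ℝ) : mixU tieFollowerU x 1 = x 1 := by
  simp [mixU, tieFollowerU, Fin.sum_univ_three]

lemma one_le_indGap_tieFollowerU : 1 ≤ indGap tieFollowerU := by
  refine le_indGap fun j => ⟨Pi.single j.castSucc 1, single_mem_stdSimplex ℝ _, fun k hk => ?_⟩
  fin_cases j <;> fin_cases k <;> simp_all [tieFollowerU]

lemma zero_mem_BRd_tieFollowerU_iff (hδ : 0 < δ) :
    (0 : Fin 2) ∈ BRd tieFollowerU δ x ↔ x 1 < x 0 + δ := by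
  simp [mem_BRd_iff, Fin.forall_fin_two, mixU_tieFollowerU_zero, mixU_tieFollowerU_one, hδ]

lemma one_mem_BRd_tieFollowerU_iff (hδ : 0 < δ) :
    (1 : Fin 2) ∈ BRd tieFollowerU δ x ↔ x 0 < x 1 + δ := by
  simp [mem_BRd_iff, Fin.forall_fin_two, mixU_tieFollowerU_zero, mixU_tieFollowerU_one, hδ]

lemma mem_BRd_tieFollowerU_single_two (hδ : 0 < δ) (j : Fin 2) :
    j ∈ BRd tieFollowerU δ (Pi.single 2 1) := by
  refine mem_BRd_iff.2 fun k => ?_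
  fin_cases j <;> fin_cases k <;> simpa [tieFollowerU]

lemma one_sub_le_valBR_single_two (hc : 0 ≤ c) (hδ : 0 < δ) :
    1 - c ≤ valBR (tieLeaderU c) tieFollowerU δ (Pi.single 2 1) := by
  refine le_valBR hδ fun j _ => ?_
  fin_cases j <;> simp [tieLeaderU, hc]

lemma valBR_tieLeaderU_le_max (hδ : 0 < δ) (hx : x ∈ simplex 3) :
    valBR (tieLeaderU c) tieFollowerU δ x ≤ max (x 2 * (1 - c)) (1 - δ) := by
  by_cases hone : (1 : Fin 2) ∈ BRd tieFollowerU δ x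
  · rw [← mixU_tieLeaderU_one]
    exact le_max_of_le_left (valBR_le_mixU _ hone)
  · have hgap : x 1 + δ ≤ x 0 := not_lt.1 (mt (one_mem_BRd_tieFollowerU_iff hδ).2 hone)
    have hzero : (0 : Fin 2) ∈ BRd tieFollowerU δ x :=
      (zero_mem_BRd_tieFollowerU_iff hδ).2 (by linarith)
    have hsum : x 0 + x 1 + x 2 = 1 := by
      rw [← Fin.sum_univ_three]
      exact hx.2
    refine le_max_of_le_right ?_
    calc valBR (tieLeaderU c) tieFollowerU δ x ≤ mixU (tieLeaderU c) x 0 := valBR_le_mixU _ hzero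
      _ = x 2 := mixU_tieLeaderU_zero c x
      _ ≤ 1 - δ := by linarith [hx.1 1]

lemma eq_single_two_of_valBR_eq_uRSE (hc : 0 ≤ c) (hcδ : c < δ) (hδ : δ < 1)
    (hx : x ∈ simplex 3)
    (hopt : valBR (tieLeaderU c) tieFollowerU δ x = uRSE (tieLeaderU c) tieFollowerU δ) :
    x = Pi.single 2 1 := by
  have hδ₀ : 0 < δ := hc.trans_lt hcδ
  have hvalue : 1 - c ≤ max (x 2 * (1 - c)) (1 - δ) :=
    calc 1 - c ≤ valBR (tieLeaderU c) tieFollowerU δ (Pi.single 2 1) :=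
          one_sub_le_valBR_single_two hc hδ₀
      _ ≤ uRSE (tieLeaderU c) tieFollowerU δ := valBR_le_uRSE _ _ hδ₀ (single_mem_stdSimplex ℝ 2)
      _ = valBR (tieLeaderU c) tieFollowerU δ x := hopt.symm
      _ ≤ max (x 2 * (1 - c)) (1 - δ) := valBR_tieLeaderU_le_max hδ₀ hx
  have hmass : 1 - c ≤ x 2 * (1 - c) := (le_max_iff.1 hvalue).resolve_right (by linarith)
  exact eq_single_of_mem_simplex_of_one_le hx
    ((le_mul_iff_one_le_left (sub_pos.2 (hcδ.trans hδ))).1 hmass)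

end TieBreakingGame

/-- the follower's tie-breaking rule matters for δ-RSE. -/
theorem tie_breaking_matters (c δ : ℝ) (hc : 0 < c) (hcδ : c < δ) (hδ : δ < 1) :
    ∃ (ul uf : Fin 3 → Fin 2 → ℝ),
      (∀ i j, ul i j ∈ Set.Icc (0:ℝ) 1) ∧ (∀ i j, uf i j ∈ Set.Icc (0:ℝ) 1) ∧
      δ < indGap uf ∧
      ∀ x ∈ simplex 3, valBR ul uf δ x = uRSE ul uf δ →
        c ≤ sSup (mixU ul x '' BRd uf δ x) - sInf (mixU ul x '' BRd uf δ x) := by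
  have hδ₀ : 0 < δ := hc.trans hcδ
  refine ⟨tieLeaderU c, tieFollowerU, tieLeaderU_mem_Icc ⟨hc.le, (hcδ.trans hδ).le⟩,
    tieFollowerU_mem_Icc, hδ.trans_le one_le_indGap_tieFollowerU, fun x hx hopt => ?_⟩
  obtain rfl : x = Pi.single 2 1 := eq_single_two_of_valBR_eq_uRSE hc.le hcδ hδ hx hopt
  calc c = mixU (tieLeaderU c) (Pi.single 2 1) 0 - mixU (tieLeaderU c) (Pi.single 2 1) 1 := by
        simp [tieLeaderU]
    _ ≤ _ := mixU_sub_mixU_le_sSup_sub_sInf _ (mem_BRd_tieFollowerU_single_two hδ₀ 0)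
        (mem_BRd_tieFollowerU_single_two hδ₀ 1)
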